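/- arXiv:2604.26484 — 2 statements merged into one kernel-verified Lean document; each statement's English description precedes it below -/
import Mathlib

section
/- For every X ∈ 𝓕, every T ∈ 𝒢, and every Z ∈ ℝ^{n×p}, one has the adjoint identity ⟨Xᵀφ(Z) + Zᵀφ(X), T⟩ = ⟨Z, φ(X)(Tᵀ + ψ(T))⟩, i.e. tr((Xᵀφ(Z) + Zᵀφ(X))ᵀ T) = tr(Zᵀ · φ(X)(Tᵀ + ψ(T))). In other words, the adjoint of DC(X) is given by DC(X)*[T] = φ(X)Φ(T) with Φ(T) = Tᵀ + ψ(T). -/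
open Matrix

attribute [local instance] Matrix.frobeniusNormedAddCommGroup Matrix.frobeniusNormedSpace

/-- Frobenius inner product `⟨A, B⟩ = tr(AᵀB)`. -/
noncomputable def frobInner {n p : ℕ} (A B : Matrix (Fin n) (Fin p) ℝ) : ℝ :=
  (Aᵀ * B).trace

/-- The constraint map `C(X) = Xᵀ φ(X) − I_p`. -/
noncomputable def Cmap {n p : ℕ}
    (φ : Matrix (Fin n) (Fin p) ℝ →ₗ[ℝ] Matrix (Fin n) (Fin p) ℝ)
    (X : Matrix (Fin n) (Fin p) ℝ) : Matrix (Fin p) (Fin p) ℝ :=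
  Xᵀ * φ X - 1

/-- The constraint dissolving operator `𝒜(X) = (3/2)X − (1/2)X φ(X)ᵀ X`. -/
noncomputable def Amap {n p : ℕ}
    (φ : Matrix (Fin n) (Fin p) ℝ →ₗ[ℝ] Matrix (Fin n) (Fin p) ℝ)
    (X : Matrix (Fin n) (Fin p) ℝ) : Matrix (Fin n) (Fin p) ℝ :=
  (3/2 : ℝ) • X - (1/2 : ℝ) • (X * (φ X)ᵀ * X)

/-- `𝒢 = span{X₁ᵀ X₂ : X₁, X₂ ∈ 𝓕}`. -/
noncomputable def Gspan {n p : ℕ} (𝓕 : Submodule ℝ (Matrix (Fin n) (Fin p) ℝ)) :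
    Submodule ℝ (Matrix (Fin p) (Fin p) ℝ) :=
  Submodule.span ℝ {T | ∃ X₁ ∈ 𝓕, ∃ X₂ ∈ 𝓕, T = X₁ᵀ * X₂}

theorem stmt_2 {n p : ℕ} (hn : 0 < n) (hp : 0 < p)
    (φ : Matrix (Fin n) (Fin p) ℝ →ₗ[ℝ] Matrix (Fin n) (Fin p) ℝ)
    (𝓕 : Submodule ℝ (Matrix (Fin n) (Fin p) ℝ))
    (ψ : Matrix (Fin p) (Fin p) ℝ →ₗ[ℝ] Matrix (Fin p) (Fin p) ℝ)
    (hφ𝓕 : ∀ X ∈ 𝓕, φ X ∈ 𝓕)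
    (hXT : ∀ X ∈ 𝓕, ∀ T ∈ Gspan 𝓕, X * T ∈ 𝓕)
    (hφsa : ∀ A B : Matrix (Fin n) (Fin p) ℝ, frobInner (φ A) B = frobInner A (φ B))
    (hψG : ∀ T ∈ Gspan 𝓕, ψ T ∈ Gspan 𝓕)
    (hφψ : ∀ X ∈ 𝓕, ∀ T ∈ Gspan 𝓕, φ (X * T) = φ X * ψ T)
    (hψφ : ∀ X ∈ 𝓕, ψ ((φ X)ᵀ * X) = Xᵀ * φ X)
    (X : Matrix (Fin n) (Fin p) ℝ) (hX : X ∈ 𝓕)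
    (T : Matrix (Fin p) (Fin p) ℝ) (hT : T ∈ Gspan 𝓕)
    (Z : Matrix (Fin n) (Fin p) ℝ) :
    ((Xᵀ * φ Z + Zᵀ * φ X)ᵀ * T).trace = (Zᵀ * (φ X * (Tᵀ + ψ T))).trace := by
  have h1 := hφsa Z (X * T)
  rw [hφψ X hX T hT] at h1
  unfold frobInner at h1
  have h2 : ((φ X)ᵀ * Z * T).trace = (Zᵀ * (φ X * Tᵀ)).trace := by
    rw [← Matrix.trace_transpose, Matrix.transpose_mul, Matrix.transpose_mul,
      Matrix.transpose_transpose, Matrix.trace_mul_comm, Matrix.mul_assoc]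
  simp only [Matrix.transpose_add, Matrix.transpose_mul, Matrix.transpose_transpose,
    Matrix.add_mul, Matrix.mul_add, Matrix.trace_add]
  rw [h2, Matrix.mul_assoc, h1, add_comm]
end

section
/- Let f : ℝ^{n×p} → ℝ satisfy |f(A) − f(B)| ≤ M‖A − B‖ for all A, B ∈ ℝ^{n×p} for some M ≥ 0, let β > 0, and define h(W) = f(𝒜(W)) + (β/2)‖C(W)‖². Let Y ∈ ℝ^{n×p} and suppose there are constants L, δ, α, α_c > 0 such that ‖𝒜(Y)‖ ≤ α/3, ‖C(𝒜(Y))‖ ≤ (1/2)‖C(Y)‖, ‖C(𝒜(Y))‖ ≤ (8 α_c L / δ²)‖C(Y)‖², and β ≥ 16 α α_c L M / (3δ²). Then h(𝒜(Y)) ≤ h(Y) − (β/8)‖C(Y)‖². -/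
open Matrix

attribute [local instance] Matrix.frobeniusNormedAddCommGroup Matrix.frobeniusNormedSpace

theorem Amap_sub_self {n p : ℕ}
    (φ : Matrix (Fin n) (Fin p) ℝ →ₗ[ℝ] Matrix (Fin n) (Fin p) ℝ)
    (W : Matrix (Fin n) (Fin p) ℝ) :
    Amap φ W - W = (-(1/2) : ℝ) • (W * (Cmap φ W)ᵀ) := by
  unfold Amap Cmap
  rw [Matrix.transpose_sub, Matrix.transpose_mul, Matrix.transpose_transpose,
    Matrix.transpose_one, Matrix.mul_sub, Matrix.mul_one, Matrix.mul_assoc]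
  module

theorem norm_Amap_sub_self {n p : ℕ}
    (φ : Matrix (Fin n) (Fin p) ℝ →ₗ[ℝ] Matrix (Fin n) (Fin p) ℝ)
    (W : Matrix (Fin n) (Fin p) ℝ) :
    ‖Amap φ W - W‖ ≤ (1/2 : ℝ) * (‖W‖ * ‖Cmap φ W‖) := by
  rw [Amap_sub_self, norm_smul]
  have h := Matrix.frobenius_norm_mul W (Cmap φ W)ᵀ
  rw [Matrix.frobenius_norm_transpose] at h
  have e : ‖(-(1/2) : ℝ)‖ = 1/2 := by rw [norm_neg]; norm_num
  rw [e]
  linarith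

theorem stmt_19 {n p : ℕ} (hn : 0 < n) (hp : 0 < p)
    (φ : Matrix (Fin n) (Fin p) ℝ →ₗ[ℝ] Matrix (Fin n) (Fin p) ℝ)
    (f : Matrix (Fin n) (Fin p) ℝ → ℝ)
    (M : ℝ) (hM0 : 0 ≤ M)
    (hM : ∀ A B : Matrix (Fin n) (Fin p) ℝ, |f A - f B| ≤ M * ‖A - B‖)
    (β : ℝ) (hβ0 : 0 < β)
    (Y : Matrix (Fin n) (Fin p) ℝ)
    (L δ α αc : ℝ) (hL0 : 0 < L) (hδ0 : 0 < δ) (hα0 : 0 < α) (hαc0 : 0 < αc)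
    (h1 : ‖Amap φ Y‖ ≤ α / 3)
    (h2 : ‖Cmap φ (Amap φ Y)‖ ≤ (1/2 : ℝ) * ‖Cmap φ Y‖)
    (h3 : ‖Cmap φ (Amap φ Y)‖ ≤ (8 * αc * L / δ ^ 2) * ‖Cmap φ Y‖ ^ 2)
    (hβ : β ≥ 16 * α * αc * L * M / (3 * δ ^ 2)) :
    f (Amap φ (Amap φ Y)) + (β / 2) * ‖Cmap φ (Amap φ Y)‖ ^ 2 ≤
      (f (Amap φ Y) + (β / 2) * ‖Cmap φ Y‖ ^ 2) - (β / 8) * ‖Cmap φ Y‖ ^ 2 := by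
  have hA := norm_Amap_sub_self φ (Amap φ Y)
  have hf := (abs_le.mp (hM (Amap φ (Amap φ Y)) (Amap φ Y))).2
  generalize ‖Amap φ (Amap φ Y) - Amap φ Y‖ = d at *
  have hc1 : 0 ≤ ‖Cmap φ (Amap φ Y)‖ := norm_nonneg _
  have hc : 0 ≤ ‖Cmap φ Y‖ := norm_nonneg _
  generalize ‖Cmap φ (Amap φ Y)‖ = c1 at *
  generalize ‖Cmap φ Y‖ = c at *
  generalize ‖Amap φ Y‖ = a at *
  have hd : d ≤ (1/2) * (α / 3 * ((8 * αc * L / δ ^ 2) * c ^ 2)) := by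
    have : a * c1 ≤ α / 3 * ((8 * αc * L / δ ^ 2) * c ^ 2) :=
      mul_le_mul h1 h3 hc1 (by positivity)
    linarith
  have hMd := mul_le_mul_of_nonneg_left hd hM0
  have hβc : 16 * α * αc * L * M / (3 * δ ^ 2) * c ^ 2 ≤ β * c ^ 2 :=
    mul_le_mul_of_nonneg_right hβ (sq_nonneg c)
  have e : M * ((1/2) * (α / 3 * ((8 * αc * L / δ ^ 2) * c ^ 2)))
      = (1/4) * (16 * α * αc * L * M / (3 * δ ^ 2) * c ^ 2) := by
    field_simp
    ring
  have hsq : c1 ^ 2 ≤ ((1/2) * c) ^ 2 := pow_le_pow_left₀ hc1 h2 2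
  have hβsq := mul_le_mul_of_nonneg_left hsq hβ0.le
  nlinarith
end
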